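/- Cisinski's invertibility criterion: in a precofibration category, a map f : A → B between cofibrant objects becomes an isomorphism in the homotopy category ho M = M[W⁻¹] if and only if there exist cofibrations f' : B → B' and f'' : B' → B'' such that f' ∘ f and f'' ∘ f' are weak equivalences. -/

import Mathlib

open CategoryTheory CategoryTheory.Limits

universe w v u

variable (C : Type u) [Category.{v} C] [HasInitial C]

/-- An Anderson–Brown–Cisinski precofibration category structure on `C`:
classes of weak equivalences `W` and cofibrations `Cof` satisfying the axioms CF1–CF4. -/
structure PrecofCat where
  /-- the class of weak equivalences -/
  W : MorphismProperty C
  /-- the class of cofibrations -/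
  Cof : MorphismProperty C
  /-- CF1: cofibrations are closed under composition -/
  cof_comp : ∀ {X Y Z : C} (f : X ⟶ Y) (g : Y ⟶ Z), Cof f → Cof g → Cof (f ≫ g)
  /-- CF1: the initial object is cofibrant -/
  initial_cofibrant : Cof (initial.to (⊥_ C))
  /-- CF1: isomorphisms are weak equivalences -/
  iso_W : ∀ {X Y : C} (f : X ⟶ Y), IsIso f → W f
  /-- CF1: isomorphisms with cofibrant domain are cofibrations -/
  iso_cof : ∀ {X Y : C} (f : X ⟶ Y), IsIso f → Cof (initial.to X) → Cof f
  /-- CF2: two-out-of-three -/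
  W_comp : ∀ {X Y Z : C} (f : X ⟶ Y) (g : Y ⟶ Z), W f → W g → W (f ≫ g)
  W_cancel_left : ∀ {X Y Z : C} (f : X ⟶ Y) (g : Y ⟶ Z), W f → W (f ≫ g) → W g
  W_cancel_right : ∀ {X Y Z : C} (f : X ⟶ Y) (g : Y ⟶ Z), W g → W (f ≫ g) → W f
  /-- CF3: pushouts of cofibrations with cofibrant corners exist -/
  pushout_exists : ∀ {A B X : C} (i : A ⟶ B) (f : A ⟶ X), Cof i →
      Cof (initial.to A) → Cof (initial.to X) →
      ∃ (D : C) (g : B ⟶ D) (j : X ⟶ D), IsPushout i f g j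
  /-- CF3: the pushout of a cofibration is a cofibration -/
  pushout_cof : ∀ {A B X D : C} (i : A ⟶ B) (f : A ⟶ X) (g : B ⟶ D) (j : X ⟶ D),
      Cof i → Cof (initial.to A) → Cof (initial.to X) → IsPushout i f g j → Cof j
  /-- CF3: the pushout of a trivial cofibration is a trivial cofibration -/
  pushout_triv_cof : ∀ {A B X D : C} (i : A ⟶ B) (f : A ⟶ X) (g : B ⟶ D) (j : X ⟶ D),
      Cof i → W i → Cof (initial.to A) → Cof (initial.to X) → IsPushout i f g j → W j
  /-- CF4: factorization of maps with cofibrant domain -/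
  factorization : ∀ {A B : C} (f : A ⟶ B), Cof (initial.to A) →
      ∃ (Z : C) (f' : A ⟶ Z) (r : Z ⟶ B), Cof f' ∧ W r ∧ f' ≫ r = f

variable {C}

/-- An object is cofibrant if the map from the initial object is a cofibration. -/
def PrecofCat.Cofibrant (P : PrecofCat C) (A : C) : Prop :=
  P.Cof (initial.to A)

namespace PrecofCat

variable (P : PrecofCat C)

lemma Cofibrant.of_cof {P : PrecofCat C} {X Y : C} (hX : P.Cofibrant X) {i : X ⟶ Y}
    (hi : P.Cof i) : P.Cofibrant Y := by
  have h := P.cof_comp _ _ hX hi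
  rwa [show initial.to X ≫ i = initial.to Y from Subsingleton.elim _ _] at h

lemma cofibrant_initial : P.Cofibrant (⊥_ C) := P.initial_cofibrant

lemma W_id (X : C) : P.W (𝟙 X) := P.iso_W _ inferInstance

lemma cof_id {X : C} (hX : P.Cofibrant X) : P.Cof (𝟙 X) := P.iso_cof _ inferInstance hX

lemma exists_pushout {X Y Z : C} (i : X ⟶ Y) (f : X ⟶ Z) (hi : P.Cof i)
    (hX : P.Cofibrant X) (hZ : P.Cofibrant Z) :
    ∃ (D : C) (g : Y ⟶ D) (j : Z ⟶ D), IsPushout i f g j ∧ P.Cof j ∧ (P.W i → P.W j) := by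
  obtain ⟨D, g, j, h⟩ := P.pushout_exists i f hi hX hZ
  exact ⟨D, g, j, h, P.pushout_cof _ _ _ _ hi hX hZ h,
    fun hw => P.pushout_triv_cof _ _ _ _ hi hw hX hZ h⟩

/-- Two cofibrant objects have a coproduct, presented as a pushout over the initial object. -/
lemma exists_coproduct {X Y : C} (hX : P.Cofibrant X) (hY : P.Cofibrant Y) :
    ∃ (K : C) (i : X ⟶ K) (j : Y ⟶ K),
      IsPushout (initial.to X) (initial.to Y) i j ∧ P.Cof i ∧ P.Cof j := by
  obtain ⟨K, i, j, h, hj, -⟩ :=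
    P.exists_pushout (initial.to X) (initial.to Y) hX P.cofibrant_initial hY
  exact ⟨K, i, j, h, P.pushout_cof _ _ _ _ hY P.cofibrant_initial hX h.flip, hj⟩

/-- A zigzag `X ⟵ Z ⟶ T ⟵ A` whose backward maps are weak equivalences and whose
middle objects are cofibrant. It represents a map from `X` to `A` in the homotopy category. -/
structure Zigzag (A X : C) where
  /-- the cofibrant replacement of `X` -/
  Z : C
  /-- the common target of the two inner maps -/
  T : C
  /-- the weak equivalence to `X` -/
  p : Z ⟶ X
  /-- the middle map -/
  b : Z ⟶ T
  /-- the weak equivalence from `A` -/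
  s : A ⟶ T
  cofibrant_Z : P.Cofibrant Z
  cofibrant_T : P.Cofibrant T
  W_p : P.W p
  W_s : P.W s

namespace Zigzag

variable {P} {A X Y : C}

/-- The relation on zigzags given by the existence of a morphism which is the identity
on the end points. -/
def Step (d e : P.Zigzag A X) : Prop :=
  ∃ (v : d.Z ⟶ e.Z) (a : d.T ⟶ e.T), v ≫ e.p = d.p ∧ d.s ≫ a = e.s ∧ v ≫ e.b = d.b ≫ a

lemma Step.W_b_iff {d e : P.Zigzag A X} (h : Step d e) : P.W d.b ↔ P.W e.b := by
  obtain ⟨v, a, hv, ha, hb⟩ := h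
  have hvW : P.W v := P.W_cancel_right _ _ e.W_p (hv ▸ d.W_p)
  have haW : P.W a := P.W_cancel_left _ _ d.W_s (ha ▸ e.W_s)
  constructor
  · intro hd
    exact P.W_cancel_left v _ hvW (hb ▸ P.W_comp _ _ hd haW)
  · intro he
    exact P.W_cancel_right _ a haW (hb ▸ P.W_comp _ _ hvW he)

/-- `IsPullback g d e` says that the zigzag `e` from `X` represents the composite of
`g : X ⟶ Y` with the zigzag `d` from `Y`. -/
def IsPullback (g : X ⟶ Y) (d : P.Zigzag A Y) (e : P.Zigzag A X) : Prop :=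
  ∃ (V : C) (x : e.Z ⟶ V) (z : d.Z ⟶ V) (r : V ⟶ Y) (a : d.T ⟶ e.T) (β : V ⟶ e.T),
    P.Cof z ∧ P.W r ∧ P.Cof a ∧ z ≫ r = d.p ∧ x ≫ r = e.p ≫ g ∧
      z ≫ β = d.b ≫ a ∧ x ≫ β = e.b ∧ d.s ≫ a = e.s

lemma exists_isPullback_of_replacement (g : X ⟶ Y) (d : P.Zigzag A Y) {Z : C}
    (hZ : P.Cofibrant Z) (q : Z ⟶ X) (hq : P.W q) :
    ∃ (T : C) (b : Z ⟶ T) (s : A ⟶ T) (hT : P.Cofibrant T) (hs : P.W s),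
      IsPullback g d ⟨Z, T, q, b, s, hZ, hT, hq, hs⟩ := by
  obtain ⟨K, i, j, hK, hi, hj⟩ := P.exists_coproduct hZ d.cofibrant_Z
  obtain ⟨V, k, r, hk, hr, hkr⟩ := P.factorization
    (hK.desc (q ≫ g) d.p (Subsingleton.elim _ _)) (hZ.of_cof hi)
  have hz : P.Cof (j ≫ k) := P.cof_comp _ _ hj hk
  have hzr : (j ≫ k) ≫ r = d.p := by simp [hkr]
  have hzW : P.W (j ≫ k) := P.W_cancel_right _ _ hr (hzr ▸ d.W_p)
  obtain ⟨T, β, a, hT, ha, haW⟩ :=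
    P.exists_pushout (j ≫ k) d.b hz d.cofibrant_Z d.cofibrant_T
  exact ⟨T, (i ≫ k) ≫ β, d.s ≫ a, d.cofibrant_T.of_cof ha, P.W_comp _ _ d.W_s (haW hzW),
    V, i ≫ k, j ≫ k, r, a, β, hz, hr, ha, hzr, by simp [hkr], hT.w, rfl, rfl⟩

lemma exists_isPullback (g : X ⟶ Y) (d : P.Zigzag A Y) : ∃ e, IsPullback g d e := by
  obtain ⟨Z, i, q, hi, hq, -⟩ := P.factorization (initial.to X) P.cofibrant_initial
  obtain ⟨T, b, s, hT, hs, h⟩ :=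
    exists_isPullback_of_replacement g d (P.cofibrant_initial.of_cof hi) q hq
  exact ⟨_, h⟩

/-- Any two composites of a map with a zigzag are equivalent. -/
lemma IsPullback.mk_eq_mk {g : X ⟶ Y} {d : P.Zigzag A Y} {e e' : P.Zigzag A X}
    (h : IsPullback g d e) (h' : IsPullback g d e') : Quot.mk Step e = Quot.mk Step e' := by
  obtain ⟨V₁, x₁, z₁, r₁, a₁, β₁, hz₁, hr₁, ha₁, hzr₁, hxr₁, hzβ₁, hxβ₁, hs₁⟩ := h
  obtain ⟨V₂, x₂, z₂, r₂, a₂, β₂, hz₂, hr₂, ha₂, hzr₂, hxr₂, hzβ₂, hxβ₂, hs₂⟩ := h'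
  have hV₂ := d.cofibrant_Z.of_cof hz₂
  have hz₁W : P.W z₁ := P.W_cancel_right _ _ hr₁ (hzr₁ ▸ d.W_p)
  have ha₁W : P.W a₁ := P.W_cancel_left _ _ d.W_s (hs₁ ▸ e.W_s)
  obtain ⟨U, u₁, u₂, hU, hu₂, hu₂W⟩ := P.exists_pushout z₁ z₂ hz₁ d.cofibrant_Z hV₂
  obtain ⟨T, t₁, t₂, hT, ht₂, ht₂W⟩ := P.exists_pushout a₁ a₂ ha₁ d.cofibrant_T e'.cofibrant_T
  have hUc := hV₂.of_cof hu₂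
  have hTc := e'.cofibrant_T.of_cof ht₂
  obtain ⟨r, hr₁', hr₂'⟩ := hU.exists_desc r₁ r₂ (by rw [hzr₁, hzr₂])
  have hr : P.W r := P.W_cancel_left _ _ (hu₂W hz₁W) (hr₂' ▸ hr₂)
  obtain ⟨β, hβ₁, hβ₂⟩ := hU.exists_desc (β₁ ≫ t₁) (β₂ ≫ t₂) (by
    rw [reassoc_of% hzβ₁, reassoc_of% hzβ₂, hT.w])
  -- a replacement `Z` of `X` receiving both replacements
  obtain ⟨K, i₁, i₂, hK, hi₁, hi₂⟩ := P.exists_coproduct e.cofibrant_Z e'.cofibrant_Z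
  have hKc := e.cofibrant_Z.of_cof hi₁
  obtain ⟨Z, k, q, hk, hq, hkq⟩ := P.factorization
    (hK.desc e.p e'.p (Subsingleton.elim _ _)) hKc
  have hq₁ : i₁ ≫ k ≫ q = e.p := by rw [hkq, hK.inl_desc]
  have hq₂ : i₂ ≫ k ≫ q = e'.p := by rw [hkq, hK.inr_desc]
  obtain ⟨m, hm₁, hm₂⟩ := hK.exists_desc (x₁ ≫ u₁) (x₂ ≫ u₂) (Subsingleton.elim _ _)
  -- enlarge `U` so that `Z` maps to it over `g`
  obtain ⟨U', n, l, hU', hl, -⟩ := P.exists_pushout k m hk hKc hUc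
  have hmr : k ≫ q ≫ g = m ≫ r := by
    apply hK.hom_ext
    · rw [reassoc_of% hq₁, reassoc_of% hm₁, hr₁', hxr₁]
    · rw [reassoc_of% hq₂, reassoc_of% hm₂, hr₂', hxr₂]
  obtain ⟨U'', l', r', hl', hr', hlr'⟩ := P.factorization
    (hU'.desc (q ≫ g) r hmr) (hUc.of_cof hl)
  have hllr : (l ≫ l') ≫ r' = r := by rw [Category.assoc, hlr', hU'.inr_desc]
  have hllW : P.W (l ≫ l') := P.W_cancel_right _ _ hr' (hllr ▸ hr)
  obtain ⟨T', β', t, hT', ht, htW⟩ :=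
    P.exists_pushout (l ≫ l') β (P.cof_comp _ _ hl hl') hUc hTc
  have hsW : P.W (e'.s ≫ t₂ ≫ t) :=
    P.W_comp _ _ e'.W_s (P.W_comp _ _ (ht₂W ha₁W) (htW hllW))
  let c : P.Zigzag A X := ⟨Z, T', q, n ≫ l' ≫ β', e'.s ≫ t₂ ≫ t,
    e.cofibrant_Z.of_cof (P.cof_comp _ _ hi₁ hk), hTc.of_cof ht, hq, hsW⟩
  have hβ' : l ≫ l' ≫ β' = β ≫ t := by simpa using hT'.w
  have h₁ : Step e c := by
    refine ⟨i₁ ≫ k, t₁ ≫ t, by simpa using hq₁, ?_, ?_⟩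
    · simp only [c, ← hs₁, ← hs₂, Category.assoc, reassoc_of% hT.w]
    · simp only [c, Category.assoc, reassoc_of% hU'.w, hβ', reassoc_of% hm₁,
        reassoc_of% hβ₁, ← hxβ₁]
  have h₂ : Step e' c := by
    refine ⟨i₂ ≫ k, t₂ ≫ t, by simpa using hq₂, rfl, ?_⟩
    simp only [c, Category.assoc, reassoc_of% hU'.w, hβ', reassoc_of% hm₂,
      reassoc_of% hβ₂, ← hxβ₂]
  exact (Quot.sound h₁).trans (Quot.sound h₂).symm

lemma IsPullback.exists_of_step {g : X ⟶ Y} {d d' : P.Zigzag A Y} {e : P.Zigzag A X}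
    (h : IsPullback g d e) (hd : Step d d') : ∃ e', IsPullback g d' e' ∧ Step e e' := by
  obtain ⟨V, x, z, r, a, β, hz, hr, ha, hzr, hxr, hzβ, hxβ, hs⟩ := h
  obtain ⟨v, u, hv, hu, hb⟩ := hd
  have haW : P.W a := P.W_cancel_left _ _ d.W_s (hs ▸ e.W_s)
  have hzW : P.W z := P.W_cancel_right _ _ hr (hzr ▸ d.W_p)
  obtain ⟨V', n, z', hV', hz', hzW'⟩ := P.exists_pushout z v hz d.cofibrant_Z d'.cofibrant_Z
  obtain ⟨T, j, a', hT, ha', haW'⟩ := P.exists_pushout a u ha d.cofibrant_T d'.cofibrant_T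
  have hs' : d'.s ≫ a' = e.s ≫ j := by rw [← hu, ← hs, Category.assoc, Category.assoc, hT.w]
  obtain ⟨r', hr₁, hr₂⟩ := hV'.exists_desc r d'.p (by rw [hzr, hv])
  obtain ⟨β', hβ₁, hβ₂⟩ := hV'.exists_desc (β ≫ j) (d'.b ≫ a') (by
    rw [reassoc_of% hzβ, reassoc_of% hb, hT.w])
  exact ⟨⟨e.Z, T, e.p, e.b ≫ j, e.s ≫ j, e.cofibrant_Z, d'.cofibrant_T.of_cof ha', e.W_p,
      hs' ▸ P.W_comp _ _ d'.W_s (haW' haW)⟩,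
    ⟨V', x ≫ n, z', r', a', β', hz', P.W_cancel_left _ _ (hzW' hzW) (hr₂ ▸ d'.W_p), ha',
      hr₂, by simpa [hr₁] using hxr, hβ₂, by simp [hβ₁, reassoc_of% hxβ], hs'⟩,
    𝟙 _, j, by simp, rfl, by simp⟩

lemma isPullback_id (d : P.Zigzag A X) : IsPullback (𝟙 X) d d :=
  ⟨d.Z, 𝟙 _, 𝟙 _, d.p, 𝟙 _, d.b, P.cof_id d.cofibrant_Z, d.W_p, P.cof_id d.cofibrant_T,
    by simp, by simp, by simp, by simp, by simp⟩

lemma IsPullback.comp {X' : C} {f : X' ⟶ X} {g : X ⟶ Y} {d : P.Zigzag A Y}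
    {e : P.Zigzag A X} {e' : P.Zigzag A X'} (hg : IsPullback g d e) (hf : IsPullback f e e') :
    IsPullback (f ≫ g) d e' := by
  obtain ⟨V₁, x₁, z₁, r₁, a₁, β₁, hz₁, hr₁, ha₁, hzr₁, hxr₁, hzβ₁, hxβ₁, hs₁⟩ := hg
  obtain ⟨V₂, x₂, z₂, r₂, a₂, β₂, hz₂, hr₂, ha₂, hzr₂, hxr₂, hzβ₂, hxβ₂, hs₂⟩ := hf
  have hz₂W : P.W z₂ := P.W_cancel_right _ _ hr₂ (hzr₂ ▸ e.W_p)
  obtain ⟨V, v₂, v₁, hV, hv₁, hv₁W⟩ := P.exists_pushout z₂ x₁ hz₂ e.cofibrant_Z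
    (d.cofibrant_Z.of_cof hz₁)
  obtain ⟨r, hr₂', hr₁'⟩ := hV.exists_desc (r₂ ≫ g) r₁ (by rw [reassoc_of% hzr₂, hxr₁])
  obtain ⟨β, hβ₂, hβ₁⟩ := hV.exists_desc β₂ (β₁ ≫ a₂) (by rw [hzβ₂, reassoc_of% hxβ₁])
  exact ⟨V, x₂ ≫ v₂, z₁ ≫ v₁, r, a₁ ≫ a₂, β, P.cof_comp _ _ hz₁ hv₁,
    P.W_cancel_left _ _ (hv₁W hz₂W) (hr₁' ▸ hr₁), P.cof_comp _ _ ha₁ ha₂,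
    by simp [hr₁', hzr₁], by simp [hr₂', reassoc_of% hxr₂], by simp [hβ₁, reassoc_of% hzβ₁],
    by simp [hβ₂, hxβ₂], by simp [reassoc_of% hs₁, hs₂]⟩

variable (P A) in
/-- Zigzags from `X` to `A` up to equivalence. -/
def Classes (X : C) : Type (max u v) := Quot (Step (P := P) (A := A) (X := X))

/-- Composition of classes of zigzags with a map. -/
noncomputable def Classes.pull (g : X ⟶ Y) : Classes P A Y → Classes P A X :=
  Quot.lift (fun d => Quot.mk _ (exists_isPullback g d).choose) (fun d d' h => by
    obtain ⟨e', he', hee'⟩ := (exists_isPullback g d).choose_spec.exists_of_step h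
    exact (Quot.sound hee').trans (he'.mk_eq_mk (exists_isPullback g d').choose_spec))

lemma IsPullback.pull_mk {g : X ⟶ Y} {d : P.Zigzag A Y} {e : P.Zigzag A X}
    (h : IsPullback g d e) :
    Classes.pull g (Quot.mk _ d : Classes P A Y) = (Quot.mk _ e : Classes P A X) :=
  (exists_isPullback g d).choose_spec.mk_eq_mk h

lemma Classes.pull_id (x : Classes P A X) : pull (𝟙 X) x = x := by
  obtain ⟨d, rfl⟩ := Quot.exists_rep x
  exact (isPullback_id d).pull_mk

lemma Classes.pull_comp {X' : C} (f : X' ⟶ X) (g : X ⟶ Y) (x : Classes P A Y) :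
    pull (f ≫ g) x = pull f (pull g x) := by
  obtain ⟨d, rfl⟩ := Quot.exists_rep x
  obtain ⟨e, he⟩ := exists_isPullback g d
  obtain ⟨e', he'⟩ := exists_isPullback f e
  rw [he.pull_mk, he'.pull_mk, (he.comp he').pull_mk]

/-- Composition of the weak equivalence to `X` with a weak equivalence out of `X`. -/
def push (d : P.Zigzag A X) (g : X ⟶ Y) (hg : P.W g) : P.Zigzag A Y where
  __ := d
  p := d.p ≫ g
  W_p := P.W_comp _ _ d.W_p hg

lemma isPullback_push (d : P.Zigzag A X) (g : X ⟶ Y) (hg : P.W g) :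
    IsPullback g (d.push g hg) d :=
  ⟨d.Z, 𝟙 _, 𝟙 _, d.p ≫ g, 𝟙 _, d.b, P.cof_id d.cofibrant_Z, P.W_comp _ _ d.W_p hg,
    P.cof_id d.cofibrant_T, by simp [push], by simp, by simp [push], by simp, by simp [push]⟩

lemma Step.push {d e : P.Zigzag A X} (h : Step d e) (g : X ⟶ Y) (hg : P.W g) :
    Step (d.push g hg) (e.push g hg) := by
  obtain ⟨v, a, hv, ha, hb⟩ := h
  exact ⟨v, a, by simp [Zigzag.push, reassoc_of% hv], ha, hb⟩

lemma IsPullback.mk_push_eq {g : X ⟶ Y} {d : P.Zigzag A Y} {e : P.Zigzag A X}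
    (h : IsPullback g d e) (hg : P.W g) :
    Quot.mk Step (e.push g hg) = Quot.mk Step d := by
  obtain ⟨V, x, z, r, a, β, hz, hr, ha, hzr, hxr, hzβ, hxβ, hs⟩ := h
  let c : P.Zigzag A Y :=
    ⟨V, e.T, r, β, e.s, d.cofibrant_Z.of_cof hz, e.cofibrant_T, hr, e.W_s⟩
  have h₁ : Step (e.push g hg) c := ⟨x, 𝟙 _, hxr, Category.comp_id _,
    hxβ.trans (Category.comp_id _).symm⟩
  have h₂ : Step d c := ⟨z, a, hzr, hs, hzβ⟩
  exact (Quot.sound h₁).trans (Quot.sound h₂).symm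

lemma Classes.bijective_pull (g : X ⟶ Y) (hg : P.W g) :
    Function.Bijective (pull g : Classes P A Y → Classes P A X) := by
  let inv : Classes P A X → Classes P A Y :=
    Quot.map (fun d => d.push g hg) (fun _ _ h => h.push g hg)
  refine Function.bijective_iff_has_inverse.2 ⟨inv, fun x => ?_, fun x => ?_⟩
  · obtain ⟨d, rfl⟩ := Quot.exists_rep x
    obtain ⟨e, he⟩ := exists_isPullback g d
    rw [he.pull_mk]
    exact he.mk_push_eq hg
  · obtain ⟨d, rfl⟩ := Quot.exists_rep x
    exact (isPullback_push d g hg).pull_mk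

variable (P A) in
/-- The functor on `C` induced by the contravariant functor which `A` represents on the
homotopy category. -/
noncomputable def classesFunctor : C ⥤ (Type (max u v))ᵒᵖ where
  obj X := .op (Classes P A X)
  map g := Quiver.Hom.op (TypeCat.ofHom (Classes.pull g))
  map_id X := Quiver.Hom.unop_inj (by ext x; exact Classes.pull_id x)
  map_comp f g := Quiver.Hom.unop_inj (by ext x; exact Classes.pull_comp f g x)

variable (P A) in
lemma classesFunctor_isInvertedBy : P.W.IsInvertedBy (classesFunctor P A) := by
  intro X Y g hg
  have : IsIso (TypeCat.ofHom (Classes.pull g : Classes P A Y → Classes P A X)) :=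
    (isIso_iff_bijective _).2 (Classes.bijective_pull g hg)
  exact inferInstanceAs (IsIso (Quiver.Hom.op (TypeCat.ofHom (Classes.pull g))))

lemma Classes.bijective_pull_of_isIso (f : X ⟶ Y) [IsIso (P.W.Q.map f)] :
    Function.Bijective (pull f : Classes P A Y → Classes P A X) := by
  have h : IsIso ((classesFunctor P A).map f) := by
    rw [← NatIso.isIso_map_iff
      (Localization.fac _ (classesFunctor_isInvertedBy P A) P.W.Q) f]
    exact inferInstanceAs (IsIso ((Localization.lift _ (classesFunctor_isInvertedBy P A)
      P.W.Q).map (P.W.Q.map f)))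
  exact (isIso_iff_bijective ((classesFunctor P A).map f).unop).1 inferInstance

end Zigzag

open Zigzag in
/-- A map between cofibrant objects that is invertible in the homotopy category becomes a weak
equivalence after composition with a suitable cofibration. -/
lemma exists_cof_comp_W {A B : C} (f : A ⟶ B) (hA : P.Cofibrant A) (hB : P.Cofibrant B)
    [IsIso (P.W.Q.map f)] : ∃ (B' : C) (f' : B ⟶ B'), P.Cof f' ∧ P.W (f ≫ f') := by
  let one : P.Zigzag A A := ⟨A, A, 𝟙 A, 𝟙 A, 𝟙 A, hA, hA, P.W_id A, P.W_id A⟩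
  obtain ⟨x, hx⟩ := (Classes.bijective_pull_of_isIso (P := P) (A := A) f).2 (Quot.mk _ one)
  obtain ⟨d, rfl⟩ := Quot.exists_rep x
  obtain ⟨T, b, s, hT, hs, h⟩ := exists_isPullback_of_replacement (𝟙 B) d hB (𝟙 B) (P.W_id B)
  have hd : (Quot.mk _ d : Classes P A B) = Quot.mk _ _ :=
    (Classes.pull_id _).symm.trans h.pull_mk
  have hf : IsPullback f (⟨B, T, 𝟙 B, b, s, hB, hT, P.W_id B, hs⟩ : P.Zigzag A B)
      ⟨A, T, 𝟙 A, f ≫ b, s, hA, hT, P.W_id A, hs⟩ :=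
    ⟨B, f, 𝟙 B, 𝟙 B, 𝟙 T, b, P.cof_id hB, P.W_id B, P.cof_id hT, by simp, by simp, by simp,
      by simp, by simp⟩
  replace hx := (hf.pull_mk.symm.trans (congrArg (Classes.pull f) hd.symm)).trans hx
  have hW : P.W (f ≫ b) = P.W (𝟙 A) :=
    congrArg (Quot.lift (fun e : P.Zigzag A A => P.W e.b) fun _ _ h => propext h.W_b_iff) hx
  obtain ⟨B', f', r, hf', hr, rfl⟩ := P.factorization b hB
  refine ⟨B', f', hf', P.W_cancel_right _ r hr ?_⟩
  rw [Category.assoc, hW]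
  exact P.W_id A

end PrecofCat

/-- Cisinski's invertibility criterion: a map `f : A ⟶ B` between cofibrant objects of a
precofibration category becomes an isomorphism in the homotopy category (the localization
of `M` at `W`) if and only if there are cofibrations `f' : B ⟶ B'` and `f'' : B' ⟶ B''`
with `f' ∘ f` and `f'' ∘ f'` weak equivalences. -/
theorem cisinski_invertibility (P : PrecofCat C) {A B : C} (f : A ⟶ B)
    (hA : P.Cofibrant A) (hB : P.Cofibrant B) :
    IsIso (P.W.Q.map f) ↔
      ∃ (B' B'' : C) (f' : B ⟶ B') (f'' : B' ⟶ B''),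
        P.Cof f' ∧ P.Cof f'' ∧ P.W (f ≫ f') ∧ P.W (f' ≫ f'') := by
  constructor
  · intro _
    obtain ⟨B', f', hf', hff'⟩ := P.exists_cof_comp_W f hA hB
    have : IsIso (P.W.Q.map f') := by
      have h : IsIso (P.W.Q.map f ≫ P.W.Q.map f') := by
        rw [← Functor.map_comp]
        exact P.W.Q_inverts _ hff'
      exact IsIso.of_isIso_comp_left (P.W.Q.map f) _
    obtain ⟨B'', f'', hf'', hff''⟩ := P.exists_cof_comp_W f' hB (hB.of_cof hf')
    exact ⟨B', B'', f', f'', hf', hf'', hff', hff''⟩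
  · rintro ⟨B', B'', f', f'', -, -, h, h'⟩
    have i₁ : IsIso (P.W.Q.map f ≫ P.W.Q.map f') := by
      rw [← Functor.map_comp]
      exact P.W.Q_inverts _ h
    have i₂ : IsIso (P.W.Q.map f' ≫ P.W.Q.map f'') := by
      rw [← Functor.map_comp]
      exact P.W.Q_inverts _ h'
    have : IsSplitMono (P.W.Q.map f') := IsSplitMono.mk' ⟨P.W.Q.map f'' ≫
      inv (P.W.Q.map f' ≫ P.W.Q.map f''), by rw [← Category.assoc, IsIso.hom_inv_id]⟩
    have : IsSplitEpi (P.W.Q.map f') := IsSplitEpi.mk' ⟨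
      inv (P.W.Q.map f ≫ P.W.Q.map f') ≫ P.W.Q.map f, by
        rw [Category.assoc, IsIso.inv_hom_id]⟩
    have : IsIso (P.W.Q.map f') := isIso_of_mono_of_isSplitEpi _
    exact IsIso.of_isIso_comp_right _ (P.W.Q.map f')
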